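/- arXiv:1505.00977 — 2 statements merged into one kernel-verified Lean document; each statement's English description precedes it below -/
import Mathlib

section
/- Every almost additive sequence Φ = (φ_n)_n of continuous functions on a one-sided subshift of finite type (Σ,σ) is asymptotically additive. -/
open MeasureTheory Filter Topology Set

namespace WG

/-- The one-sided subshift of finite type determined by a 0-1 transition matrix `M`. -/
abbrev Space {k : ℕ} (M : Matrix (Fin k) (Fin k) ℕ) : Type :=
  {ω : ℕ → Fin k // ∀ i : ℕ, M (ω i) (ω (i + 1)) = 1}

variable {k : ℕ}

/-- The shift map on the subshift. -/
def shift (M : Matrix (Fin k) (Fin k) ℕ) (ω : Space M) : Space M :=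
  ⟨fun i => ω.1 (i + 1), fun i => ω.2 (i + 1)⟩

/-- `M` is a 0-1 matrix and the subshift is topologically mixing:
some power of `M` has all entries strictly positive. -/
def Mixing (M : Matrix (Fin k) (Fin k) ℕ) : Prop :=
  (∀ i j, M i j = 0 ∨ M i j = 1) ∧ ∃ l : ℕ, 0 < l ∧ ∀ i j, 0 < (M ^ l) i j

/-- The cylinder `C_{w₀ … w_{n-1}}`. -/
def cyl (M : Matrix (Fin k) (Fin k) ℕ) (n : ℕ) (w : Fin n → Fin k) : Set (Space M) :=
  {ω | ∀ j : Fin n, ω.1 j.1 = w j}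

/-- The initial word of length `n` of a point `ω`. -/
def word (M : Matrix (Fin k) (Fin k) ℕ) (n : ℕ) (ω : Space M) : Fin n → Fin k :=
  fun j => ω.1 j.1

/-- Birkhoff sums `S_n f`. -/
noncomputable def birk (M : Matrix (Fin k) (Fin k) ℕ) (f : Space M → ℝ) (n : ℕ)
    (ω : Space M) : ℝ :=
  ∑ j ∈ Finset.range n, f ((shift M)^[j] ω)

/-- The standard metric `d(ω,κ) = ∑ᵢ |ωᵢ - κᵢ| / 2^{i+1}` on the shift space. -/
noncomputable def dist' (M : Matrix (Fin k) (Fin k) ℕ) (ω κ : Space M) : ℝ :=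
  ∑' i : ℕ, |((ω.1 i : ℕ) : ℝ) - ((κ.1 i : ℕ) : ℝ)| / 2 ^ (i + 1)

/-- `E` is an `(n,ε)`-separated set. -/
def IsSep (M : Matrix (Fin k) (Fin k) ℕ) (n : ℕ) (ε : ℝ) (E : Finset (Space M)) : Prop :=
  ∀ ω ∈ E, ∀ κ ∈ E, ω ≠ κ → ∃ i < n, ε < dist' M ((shift M)^[i] ω) ((shift M)^[i] κ)

/-- `P(Φ, n, ε)`: supremum of `∑_{ω ∈ E} exp(φ_n ω)` over `(n,ε)`-separated sets `E`. -/
noncomputable def sepSum (M : Matrix (Fin k) (Fin k) ℕ) (Φ : ℕ → Space M → ℝ)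
    (n : ℕ) (ε : ℝ) : ℝ :=
  sSup {s | ∃ E : Finset (Space M), IsSep M n ε E ∧ s = ∑ ω ∈ E, Real.exp (Φ n ω)}

/-- `P` is the topological pressure of the sequence `Φ`:
`P = lim_{ε→0⁺} limsup_n (1/n) log P(Φ,n,ε)`. -/
def IsPressure (M : Matrix (Fin k) (Fin k) ℕ) (Φ : ℕ → Space M → ℝ) (P : ℝ) : Prop :=
  Tendsto (fun ε : ℝ => limsup (fun n : ℕ => Real.log (sepSum M Φ n ε) / n) atTop)
    (𝓝[>] (0 : ℝ)) (𝓝 P)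

/-- The sequence `Φ = (φ_n)` is asymptotically additive. -/
def AsympAdd (M : Matrix (Fin k) (Fin k) ℕ) (Φ : ℕ → Space M → ℝ) : Prop :=
  (∀ n, Continuous (Φ n)) ∧
  ∀ ε > (0 : ℝ), ∃ ρ : Space M → ℝ, Continuous ρ ∧
    limsup (fun n : ℕ => (⨆ ω : Space M, |Φ n ω - birk M ρ n ω|) / n) atTop < ε

/-- `μ` is a weak Gibbs measure for the sequence `Φ` with constant `P`. -/
def WeakGibbs (M : Matrix (Fin k) (Fin k) ℕ) (Φ : ℕ → Space M → ℝ) (P : ℝ)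
    (μ : Measure (Space M)) : Prop :=
  ∃ K : ℕ → ℝ, (∀ n, 0 < K n) ∧ Tendsto (fun n : ℕ => Real.log (K n) / n) atTop (𝓝 0) ∧
    ∀ n : ℕ, ∀ w : Fin n → Fin k, ∀ ω ∈ cyl M n w,
      1 / K n ≤ (μ (cyl M n w)).toReal / Real.exp (Φ n ω - n * P) ∧
      (μ (cyl M n w)).toReal / Real.exp (Φ n ω - n * P) ≤ K n

/-- `μ` is a Gibbs measure for the sequence `Φ` with constant `P`. -/
def Gibbs (M : Matrix (Fin k) (Fin k) ℕ) (Φ : ℕ → Space M → ℝ) (P : ℝ)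
    (μ : Measure (Space M)) : Prop :=
  ∃ K : ℝ, 0 < K ∧
    ∀ n : ℕ, ∀ w : Fin n → Fin k, ∀ ω ∈ cyl M n w,
      1 / K ≤ (μ (cyl M n w)).toReal / Real.exp (Φ n ω - n * P) ∧
      (μ (cyl M n w)).toReal / Real.exp (Φ n ω - n * P) ≤ K

/-- Sum of `exp(φ_n ω)` over points of period `n`. -/
noncomputable def perSum (M : Matrix (Fin k) (Fin k) ℕ) (Φ : ℕ → Space M → ℝ) (n : ℕ) : ℝ :=
  ∑' ω : {ω : Space M // (shift M)^[n] ω = ω}, Real.exp (Φ n ω.1)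

/-- `var_n(g)`: the variation of `g` over cylinders of length `n`. -/
noncomputable def varCyl (M : Matrix (Fin k) (Fin k) ℕ) (n : ℕ) (g : Space M → ℝ) : ℝ :=
  sSup {x | ∃ ω κ : Space M, (∀ j : Fin n, ω.1 j.1 = κ.1 j.1) ∧ x = |g ω - g κ|}

open Classical in
/-- `∑_{C ∈ Z_n} exp (sup_C S_n φ)`: the cylinder partition sum of `φ`. -/
noncomputable def cylSum (M : Matrix (Fin k) (Fin k) ℕ) (φ : Space M → ℝ) (n : ℕ) : ℝ :=
  ∑ w ∈ Finset.univ.filter (fun w : Fin n → Fin k => (cyl M n w).Nonempty),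
    Real.exp (sSup (birk M φ n '' cyl M n w))

end WG

/-!
Let `C` bound the additivity defect of `Φ`. The sum of `Φ (j + m) x - Φ j x` over `j < n` differs
from the Birkhoff sum of `Φ m` by at most `n * C`. The same sum telescopes to that of
`Φ (n + j) x - Φ j x` over `j < m`, which differs from `m • Φ n x` by a quantity bounded
independently of `n` and `x`. So dividing by `m` shows that the Birkhoff sums of `Φ m / m`
approximate `Φ n` up to `n * (C / m) + O(1)`, and `C / m` is small once `m` is large.
-/

open scoped NNReal

theorem sum_range_add_right_sub_eq_sum_range_add_left_sub {G : Type*} [AddCommGroup G]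
    (a : ℕ → G) (m n : ℕ) :
    ∑ j ∈ Finset.range n, (a (j + m) - a j) = ∑ j ∈ Finset.range m, (a (n + j) - a j) := by
  simp only [Finset.sum_sub_distrib, add_comm _ m]
  rw [sub_eq_sub_iff_add_eq_add, add_comm, ← Finset.sum_range_add a m n,
    add_comm _ (∑ j ∈ Finset.range n, a j), ← Finset.sum_range_add a n m, add_comm m n]

theorem limsup_div_natCast_le {u : ℕ → ℝ} {a b : ℝ} (hu : ∀ n, 0 ≤ u n)
    (hub : ∀ n : ℕ, u n ≤ n * a + b) : limsup (fun n : ℕ ↦ u n / n) atTop ≤ a := by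
  have hlim : Tendsto (fun n : ℕ ↦ a + b / n) atTop (𝓝 a) := by
    simpa using tendsto_const_nhds.add (tendsto_const_div_atTop_nhds_zero_nat b)
  have hle : ∀ᶠ n : ℕ in atTop, u n / n ≤ a + b / n := by
    filter_upwards [eventually_gt_atTop 0] with n hn
    have hn_ne : (n : ℝ) ≠ 0 := Nat.cast_ne_zero.2 hn.ne'
    calc u n / n ≤ (n * a + b) / n := by gcongr; exact hub n
      _ = a + b / n := by rw [add_div, mul_div_cancel_left₀ a hn_ne]
  calc limsup (fun n : ℕ ↦ u n / n) atTop ≤ limsup (fun n : ℕ ↦ a + b / n) atTop :=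
        limsup_le_limsup hle
          (IsCoboundedUnder.of_frequently_ge (a := 0)
            (Frequently.of_forall fun n ↦ div_nonneg (hu n) n.cast_nonneg))
          hlim.isBoundedUnder_le
    _ = a := hlim.limsup_eq

theorem compactSpace_subtype_forall_succ {A : Type*} [TopologicalSpace A] [CompactSpace A]
    {r : A → A → Prop} (hr : IsClosed {p : A × A | r p.1 p.2}) :
    CompactSpace {ω : ℕ → A // ∀ i, r (ω i) (ω (i + 1))} := by
  have hclosed : IsClosed {ω : ℕ → A | ∀ i, r (ω i) (ω (i + 1))} := by
    simp only [ofPred_forall]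
    exact isClosed_iInter fun i ↦
      hr.preimage (f := fun ω : ℕ → A ↦ (ω i, ω (i + 1)))
        ((continuous_apply i).prodMk (continuous_apply (i + 1)))
  exact isCompact_iff_compactSpace.1 hclosed.isCompact

/-- The sequence `Φ` of functions is almost additive along the orbits of `T`, with additivity
defect at most `C`. The values may lie in any seminormed group; for real-valued functions the norm
inequality is the usual pair of one-sided inequalities. -/
def IsAlmostAdditiveWith {X E : Type*} [SeminormedAddCommGroup E] (C : ℝ≥0) (T : X → X)
    (Φ : ℕ → X → E) : Prop :=
  ∀ n m x, ‖Φ (n + m) x - (Φ n x + Φ m (T^[n] x))‖ ≤ C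

namespace IsAlmostAdditiveWith

section SeminormedAddCommGroup

variable {X E : Type*} [SeminormedAddCommGroup E] {C : ℝ≥0} {T : X → X} {Φ : ℕ → X → E}

theorem norm_apply_zero_le (hΦ : IsAlmostAdditiveWith C T Φ) (x : X) : ‖Φ 0 x‖ ≤ C := by
  simpa using hΦ 0 0 x

theorem norm_apply_le (hΦ : IsAlmostAdditiveWith C T Φ) {B : ℝ} (hB : ∀ x, ‖Φ 1 x‖ ≤ B) (n : ℕ)
    (x : X) : ‖Φ n x‖ ≤ n * (B + C) + C := by
  induction n with
  | zero => simpa using hΦ.norm_apply_zero_le x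
  | succ n ih =>
    calc ‖Φ (n + 1) x‖
        ≤ ‖Φ n x + Φ 1 (T^[n] x)‖ + ‖Φ (n + 1) x - (Φ n x + Φ 1 (T^[n] x))‖ :=
          norm_le_norm_add_norm_sub' ..
      _ ≤ (n * (B + C) + C + B) + C := by
          gcongr
          · exact norm_add_le_of_le ih (hB _)
          · exact hΦ n 1 x
      _ = (n + 1 : ℕ) * (B + C) + C := by push_cast; ring

theorem norm_sum_range_sub_birkhoffSum_le (hΦ : IsAlmostAdditiveWith C T Φ) (m n : ℕ) (x : X) :
    ‖∑ j ∈ Finset.range n, (Φ (j + m) x - Φ j x) - birkhoffSum T (Φ m) n x‖ ≤ n * C := by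
  rw [birkhoffSum, ← Finset.sum_sub_distrib]
  refine (norm_sum_le_of_le (n := fun _ ↦ (C : ℝ)) _ fun j _ ↦ ?_).trans_eq
    (by rw [Finset.sum_const, Finset.card_range, nsmul_eq_mul])
  simpa only [sub_sub] using hΦ j m x

theorem norm_sum_range_sub_nsmul_le (hΦ : IsAlmostAdditiveWith C T Φ) {m : ℕ} {K : ℝ}
    (hK : ∀ j < m, ∀ x, ‖Φ j x‖ ≤ K) (n : ℕ) (x : X) :
    ‖∑ j ∈ Finset.range m, (Φ (n + j) x - Φ j x) - m • Φ n x‖ ≤ m * (C + 2 * K) := by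
  have hsum : ∑ j ∈ Finset.range m, (Φ (n + j) x - Φ j x) - m • Φ n x =
      ∑ j ∈ Finset.range m, (Φ (n + j) x - Φ j x - Φ n x) := by
    rw [Finset.sum_sub_distrib (g := fun _ ↦ Φ n x), Finset.sum_const, Finset.card_range]
  rw [hsum]
  refine (norm_sum_le_of_le (n := fun _ ↦ C + 2 * K) _ fun j hj ↦ ?_).trans_eq
    (by rw [Finset.sum_const, Finset.card_range, nsmul_eq_mul])
  have hj : j < m := Finset.mem_range.1 hj
  calc ‖Φ (n + j) x - Φ j x - Φ n x‖
      = ‖(Φ (n + j) x - (Φ n x + Φ j (T^[n] x))) + (Φ j (T^[n] x) - Φ j x)‖ := by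
        congr 1; abel
    _ ≤ C + (K + K) :=
        norm_add_le_of_le (hΦ n j x) (norm_sub_le_of_le (hK j hj _) (hK j hj x))
    _ = C + 2 * K := by ring

theorem norm_nsmul_sub_birkhoffSum_le (hΦ : IsAlmostAdditiveWith C T Φ) {m : ℕ} {K : ℝ}
    (hK : ∀ j < m, ∀ x, ‖Φ j x‖ ≤ K) (n : ℕ) (x : X) :
    ‖m • Φ n x - birkhoffSum T (Φ m) n x‖ ≤ n * C + m * (C + 2 * K) := by
  have hbirkhoff := hΦ.norm_sum_range_sub_birkhoffSum_le m n x
  rw [sum_range_add_right_sub_eq_sum_range_add_left_sub (fun j ↦ Φ j x)] at hbirkhoff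
  rw [← sub_sub_sub_cancel_left]
  exact norm_sub_le_of_le hbirkhoff (hΦ.norm_sum_range_sub_nsmul_le hK n x)

end SeminormedAddCommGroup

section NormedSpace

variable {X E : Type*} [SeminormedAddCommGroup E] [NormedSpace ℝ E] {C : ℝ≥0} {T : X → X}
  {Φ : ℕ → X → E}

theorem norm_sub_birkhoffSum_inv_smul_le (hΦ : IsAlmostAdditiveWith C T Φ) {m : ℕ} (hm : 0 < m)
    {K : ℝ} (hK : ∀ j < m, ∀ x, ‖Φ j x‖ ≤ K) (n : ℕ) (x : X) :
    ‖Φ n x - birkhoffSum T ((m : ℝ)⁻¹ • Φ m) n x‖ ≤ n * (C / m) + (C + 2 * K) := by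
  have hm' : (0 : ℝ) < m := Nat.cast_pos.2 hm
  have hscale : Φ n x - birkhoffSum T ((m : ℝ)⁻¹ • Φ m) n x =
      (m : ℝ)⁻¹ • (m • Φ n x - birkhoffSum T (Φ m) n x) := by
    simp only [birkhoffSum, Pi.smul_apply, ← Finset.smul_sum, smul_sub]
    rw [← Nat.cast_smul_eq_nsmul ℝ m, inv_smul_smul₀ hm'.ne']
  calc ‖Φ n x - birkhoffSum T ((m : ℝ)⁻¹ • Φ m) n x‖
      = (m : ℝ)⁻¹ * ‖m • Φ n x - birkhoffSum T (Φ m) n x‖ := by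
        rw [hscale, norm_smul, norm_inv, Real.norm_natCast]
    _ ≤ (m : ℝ)⁻¹ * (n * C + m * (C + 2 * K)) := by
        gcongr
        exact hΦ.norm_nsmul_sub_birkhoffSum_le hK n x
    _ = n * (C / m) + (C + 2 * K) := by field_simp

theorem limsup_iSup_norm_sub_birkhoffSum_inv_smul_div_le (hΦ : IsAlmostAdditiveWith C T Φ)
    (hbdd : Bornology.IsBounded (range (Φ 1))) {m : ℕ} (hm : 0 < m) :
    limsup (fun n : ℕ ↦ (⨆ x, ‖Φ n x - birkhoffSum T ((m : ℝ)⁻¹ • Φ m) n x‖) / n) atTop ≤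
      C / m := by
  obtain ⟨B, hB, hΦB⟩ := hbdd.exists_pos_norm_le
  have hK : ∀ j < m, ∀ x, ‖Φ j x‖ ≤ m * (B + C) + C := fun j hj x ↦
    (hΦ.norm_apply_le (fun y ↦ hΦB _ (mem_range_self y)) j x).trans (by gcongr)
  exact limsup_div_natCast_le (fun n ↦ Real.iSup_nonneg fun x ↦ norm_nonneg _) fun n ↦
    Real.iSup_le (hΦ.norm_sub_birkhoffSum_inv_smul_le hm hK n) (by positivity)

end NormedSpace

end IsAlmostAdditiveWith

theorem almostAdd_asympAdd_general {X E : Type*} [TopologicalSpace X] [SeminormedAddCommGroup E]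
    [NormedSpace ℝ E] {C : ℝ≥0} {T : X → X} {Φ : ℕ → X → E} (hcont : ∀ n, Continuous (Φ n))
    (hbdd : Bornology.IsBounded (range (Φ 1))) (hΦ : IsAlmostAdditiveWith C T Φ)
    {ε : ℝ} (hε : 0 < ε) :
    ∃ ρ : X → E, Continuous ρ ∧
      limsup (fun n : ℕ ↦ (⨆ x, ‖Φ n x - birkhoffSum T ρ n x‖) / n) atTop < ε := by
  obtain ⟨m, hm⟩ := exists_nat_gt (C / ε)
  have hm_pos : (0 : ℝ) < m := lt_of_le_of_lt (by positivity) hm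
  refine ⟨(m : ℝ)⁻¹ • Φ m, (hcont m).const_smul _, ?_⟩
  calc limsup (fun n : ℕ ↦ (⨆ x, ‖Φ n x - birkhoffSum T ((m : ℝ)⁻¹ • Φ m) n x‖) / n) atTop
      ≤ C / m :=
        hΦ.limsup_iSup_norm_sub_birkhoffSum_inv_smul_div_le hbdd (Nat.cast_pos.1 hm_pos)
    _ < ε := (div_lt_comm₀ hε hm_pos).1 hm

namespace WG

instance compactSpace_space {k : ℕ} (M : Matrix (Fin k) (Fin k) ℕ) : CompactSpace (Space M) :=
  compactSpace_subtype_forall_succ (r := fun a b ↦ M a b = 1) (isClosed_discrete _)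

theorem isAlmostAdditiveWith_shift {k : ℕ} {M : Matrix (Fin k) (Fin k) ℕ} {Φ : ℕ → Space M → ℝ}
    {C : ℝ≥0} (h : ∀ n m : ℕ, ∀ ω : Space M,
      -C + Φ n ω + Φ m ((shift M)^[n] ω) ≤ Φ (n + m) ω ∧
        Φ (n + m) ω ≤ C + Φ n ω + Φ m ((shift M)^[n] ω)) :
    IsAlmostAdditiveWith C (shift M) Φ := fun n m ω ↦
  abs_le.2 ⟨by linarith [(h n m ω).1], by linarith [(h n m ω).2]⟩

end WG

open WG in
/-- every almost additive sequence of continuous functions on a one-sided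
subshift of finite type is asymptotically additive. -/
theorem almostAdd_asympAdd
    {k : ℕ} (M : Matrix (Fin k) (Fin k) ℕ)
    (Φ : ℕ → Space M → ℝ) (hcont : ∀ n, Continuous (Φ n))
    (halm : ∃ C > (0 : ℝ), ∀ n m : ℕ, ∀ ω : Space M,
      -C + Φ n ω + Φ m ((shift M)^[n] ω) ≤ Φ (n + m) ω ∧
        Φ (n + m) ω ≤ C + Φ n ω + Φ m ((shift M)^[n] ω)) :
    AsympAdd M Φ := by
  obtain ⟨C, hC, h⟩ := halm
  exact ⟨hcont, fun _ ↦ almostAdd_asympAdd_general hcont (isCompact_range (hcont 1)).isBounded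
    (isAlmostAdditiveWith_shift (C := ⟨C, hC.le⟩) h)⟩
end

section
/- Every weak Gibbs measure μ for a continuous potential φ : Σ → ℝ on a topologically mixing one-sided subshift of finite type (Σ,σ) is a Gibbs measure for some asymptotically additive sequence Ψ = (ψ_n)_n on Σ. -/
open MeasureTheory Filter Topology Set

/-! Let `ψₙ(ω) = log μ(C) + nP`, where `C` is the cylinder of length `n` containing `ω`. Then
`μ(C) = exp (ψₙ(ω) - nP)` on the nose, and the weak Gibbs property of `μ` says exactly that
`|ψₙ - φₙ| ≤ log K(n) = o(n)` uniformly. Asymptotic additivity and the pressure depend on a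
sequence only through suprema that move by at most `c` when the sequence moves by at most `c`, so
neither changes under a perturbation of size `o(n)`. -/

namespace WG

section RealEstimates

/- Both domination hypotheses are there because `sSup` of an unbounded set of reals is `0`: they
make `s` and `t` unbounded together. -/
theorem sSup_le_map_sSup {s t : Set ℝ} {f : ℝ → ℝ} (hf : Monotone f) (hf₀ : 0 ≤ f 0)
    (hst : ∀ x ∈ s, ∃ y ∈ t, x ≤ f y) (hts : ∀ y ∈ t, ∃ x ∈ s, y ≤ f x) :
    sSup s ≤ f (sSup t) := by
  have bddAbove_of_bddAbove (hs : BddAbove s) : BddAbove t := by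
    obtain ⟨B, hB⟩ := hs
    refine ⟨f B, fun y hy => ?_⟩
    obtain ⟨x, hx, hyx⟩ := hts y hy
    exact hyx.trans (hf (hB hx))
  by_cases ht : BddAbove t
  · rcases s.eq_empty_or_nonempty with rfl | hs
    · have ht_empty : t = ∅ := eq_empty_of_forall_notMem fun y hy => by simpa using hts y hy
      simpa [ht_empty] using hf₀
    · refine csSup_le hs fun x hx => ?_
      obtain ⟨y, hy, hxy⟩ := hst x hx
      exact hxy.trans (hf (le_csSup ht hy))
  · rwa [Real.sSup_of_not_bddAbove ht, Real.sSup_of_not_bddAbove (mt bddAbove_of_bddAbove ht)]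

theorem iSup_le_iSup_add {ι : Type*} {f g : ι → ℝ} {c : ℝ} (hc : 0 ≤ c)
    (h : ∀ i, |f i - g i| ≤ c) : ⨆ i, f i ≤ (⨆ i, g i) + c := by
  refine sSup_le_map_sSup (f := (· + c)) (fun x y hxy => add_le_add_left hxy c) (by simpa) ?_ ?_
  · rintro _ ⟨i, rfl⟩
    exact ⟨g i, mem_range_self i, by linarith [(abs_le.1 (h i)).2]⟩
  · rintro _ ⟨i, rfl⟩
    exact ⟨f i, mem_range_self i, by linarith [(abs_le.1 (h i)).1]⟩

theorem abs_iSup_sub_iSup_le {ι : Type*} {f g : ι → ℝ} {c : ℝ} (hc : 0 ≤ c)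
    (h : ∀ i, |f i - g i| ≤ c) : |(⨆ i, f i) - ⨆ i, g i| ≤ c :=
  abs_sub_le_iff.2 ⟨sub_le_iff_le_add'.2 (iSup_le_iSup_add hc h),
    sub_le_iff_le_add'.2 (iSup_le_iSup_add hc fun i => abs_sub_comm (f i) (g i) ▸ h i)⟩

theorem limsup_le_limsup_add {ι : Type*} {l : Filter ι} {a b : ι → ℝ} {c : ℝ} (hc : 0 ≤ c)
    (h : ∀ᶠ i in l, |a i - b i| ≤ c) : limsup a l ≤ limsup b l + c := by
  rw [limsup_eq, limsup_eq, Real.sInf_def, Real.sInf_def, neg_le_iff_add_nonneg]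
  suffices sSup (-{x | ∀ᶠ i in l, b i ≤ x}) ≤ sSup (-{x | ∀ᶠ i in l, a i ≤ x}) + c by linarith
  refine sSup_le_map_sSup (f := (· + c)) (fun x y hxy => add_le_add_left hxy c) (by simpa) ?_ ?_
  · intro x (hx : ∀ᶠ i in l, b i ≤ -x)
    refine ⟨x - c, ?_, by simp⟩
    filter_upwards [h, hx] with i hi hxi
    linarith [(abs_le.1 hi).2]
  · intro x (hx : ∀ᶠ i in l, a i ≤ -x)
    refine ⟨x - c, ?_, by simp⟩
    filter_upwards [h, hx] with i hi hxi
    linarith [(abs_le.1 hi).1]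

theorem limsup_eq_of_tendsto_sub {ι : Type*} {l : Filter ι} {a b : ι → ℝ}
    (h : Tendsto (fun i => a i - b i) l (𝓝 0)) : limsup a l = limsup b l := by
  have eventually_close (ε : ℝ) (hε : 0 < ε) : ∀ᶠ i in l, |a i - b i| ≤ ε := by
    filter_upwards [Metric.tendsto_nhds.1 h ε hε] with i hi
    simpa using hi.le
  refine le_antisymm (le_of_forall_pos_le_add fun ε hε => ?_)
    (le_of_forall_pos_le_add fun ε hε => ?_)
  · exact limsup_le_limsup_add hε.le (eventually_close ε hε)
  · exact limsup_le_limsup_add hε.le (by simpa only [abs_sub_comm] using eventually_close ε hε)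

theorem abs_log_sub_log_le {x y c : ℝ} (hx : 0 ≤ x) (hy : 0 ≤ y) (hc : 0 ≤ c)
    (hxy : x ≤ Real.exp c * y) (hyx : y ≤ Real.exp c * x) : |Real.log x - Real.log y| ≤ c := by
  have log_le {u v : ℝ} (hu : 0 < u) (hv : 0 < v) (huv : u ≤ Real.exp c * v) :
      Real.log u - Real.log v ≤ c := by
    rw [← Real.log_div hu.ne' hv.ne', Real.log_le_iff_le_exp (div_pos hu hv)]
    exact (div_le_iff₀ hv).2 huv
  rcases hx.eq_or_lt with rfl | hx
  · obtain rfl : y = 0 := le_antisymm (by simpa using hyx) hy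
    simpa
  · have hy : 0 < y := pos_of_mul_pos_right (hx.trans_le hxy) (Real.exp_pos c).le
    exact abs_sub_le_iff.2 ⟨log_le hx hy hxy, log_le hy hx hyx⟩

theorem abs_log_le_log {x K : ℝ} (hK : 0 < K) (h : 1 / K ≤ x ∧ x ≤ K) :
    |Real.log x| ≤ Real.log K := by
  have inv_pos : 0 < 1 / K := one_div_pos.2 hK
  refine abs_le.2 ⟨?_, Real.log_le_log (inv_pos.trans_le h.1) h.2⟩
  simpa using Real.log_le_log inv_pos h.1

theorem sum_exp_le_exp_mul_sum_exp {ι : Type*} {s : Finset ι} {f g : ι → ℝ} {c : ℝ}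
    (h : ∀ i ∈ s, f i ≤ g i + c) :
    ∑ i ∈ s, Real.exp (f i) ≤ Real.exp c * ∑ i ∈ s, Real.exp (g i) := by
  rw [Finset.mul_sum]
  gcongr with i hi
  rw [← Real.exp_add, Real.exp_le_exp, add_comm]
  exact h i hi

end RealEstimates

theorem limsup_div_eq_of_tendstoUniformly {X : Type*} {Φ Ψ : ℕ → X → ℝ} {a b : ℕ → ℝ}
    (h : TendstoUniformly (fun n x => (Ψ n x - Φ n x) / n) 0 atTop)
    (hab : ∀ n c, 0 ≤ c → (∀ x, |Ψ n x - Φ n x| ≤ c) → |a n - b n| ≤ c) :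
    limsup (fun n => a n / n) atTop = limsup (fun n => b n / n) atTop := by
  have isLittleO : (fun n => a n - b n) =o[atTop] fun n => (n : ℝ) := by
    refine Asymptotics.isLittleO_iff.2 fun ε hε => ?_
    filter_upwards [Metric.tendstoUniformly_iff.1 h ε hε, eventually_gt_atTop 0] with n hn hn_pos
    have hn_pos : (0 : ℝ) < n := Nat.cast_pos.2 hn_pos
    rw [Real.norm_eq_abs, Real.norm_natCast]
    refine hab n _ (by positivity) fun x => ?_
    simpa [abs_div, div_le_iff₀ hn_pos] using (hn x).le
  apply limsup_eq_of_tendsto_sub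
  simpa only [sub_div] using isLittleO.tendsto_div_nhds_zero

variable {k : ℕ} {M : Matrix (Fin k) (Fin k) ℕ} {Φ Ψ : ℕ → Space M → ℝ} {P : ℝ}
  {μ : Measure (Space M)}

theorem continuous_shift : Continuous (shift M) :=
  Continuous.subtype_mk (f := fun (ω : Space M) i => ω.1 (i + 1))
    (continuous_pi fun i => (continuous_apply (i + 1)).comp continuous_subtype_val) _

theorem continuous_birk {f : Space M → ℝ} (hf : Continuous f) (n : ℕ) : Continuous (birk M f n) :=
  continuous_finsetSum _ fun j _ => hf.comp (continuous_shift.iterate j)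

theorem asympAdd_birk {f : Space M → ℝ} (hf : Continuous f) : AsympAdd M (birk M f) :=
  ⟨continuous_birk hf, fun ε hε => ⟨f, hf, by simpa using hε⟩⟩

theorem AsympAdd.congr (hΦ : AsympAdd M Φ) (hΨ : ∀ n, Continuous (Ψ n))
    (h : TendstoUniformly (fun n ω => (Ψ n ω - Φ n ω) / n) 0 atTop) : AsympAdd M Ψ := by
  refine ⟨hΨ, fun ε hε => ?_⟩
  obtain ⟨ρ, hρ, hlimsup⟩ := hΦ.2 ε hε
  refine ⟨ρ, hρ, (limsup_div_eq_of_tendstoUniformly h fun n c hc hn => ?_).trans_lt hlimsup⟩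
  refine abs_iSup_sub_iSup_le hc fun ω => (abs_abs_sub_abs_le_abs_sub _ _).trans ?_
  simpa only [sub_sub_sub_cancel_right] using hn ω

theorem sepSum_nonneg (Φ : ℕ → Space M → ℝ) (n : ℕ) (ε : ℝ) : 0 ≤ sepSum M Φ n ε := by
  apply Real.sSup_nonneg
  rintro _ ⟨E, -, rfl⟩
  positivity

theorem sepSum_le_exp_mul_sepSum {n : ℕ} {c : ℝ} (h : ∀ ω, |Ψ n ω - Φ n ω| ≤ c) (ε : ℝ) :
    sepSum M Ψ n ε ≤ Real.exp c * sepSum M Φ n ε := by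
  refine sSup_le_map_sSup (f := (Real.exp c * ·))
    (monotone_mul_left_of_nonneg (Real.exp_pos c).le) (by simp) ?_ ?_
  · rintro _ ⟨E, hE, rfl⟩
    refine ⟨_, ⟨E, hE, rfl⟩, sum_exp_le_exp_mul_sum_exp fun ω _ => ?_⟩
    linarith [(abs_le.1 (h ω)).2]
  · rintro _ ⟨E, hE, rfl⟩
    refine ⟨_, ⟨E, hE, rfl⟩, sum_exp_le_exp_mul_sum_exp fun ω _ => ?_⟩
    linarith [(abs_le.1 (h ω)).1]

theorem abs_log_sepSum_sub_log_sepSum_le {n : ℕ} {c : ℝ} (hc : 0 ≤ c)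
    (h : ∀ ω, |Ψ n ω - Φ n ω| ≤ c) (ε : ℝ) :
    |Real.log (sepSum M Ψ n ε) - Real.log (sepSum M Φ n ε)| ≤ c :=
  abs_log_sub_log_le (sepSum_nonneg Ψ n ε) (sepSum_nonneg Φ n ε) hc
    (sepSum_le_exp_mul_sepSum h ε)
    (sepSum_le_exp_mul_sepSum (fun ω => abs_sub_comm (Ψ n ω) (Φ n ω) ▸ h ω) ε)

theorem IsPressure.congr (hΦ : IsPressure M Φ P)
    (h : TendstoUniformly (fun n ω => (Ψ n ω - Φ n ω) / n) 0 atTop) : IsPressure M Ψ P :=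
  Tendsto.congr (fun ε => (limsup_div_eq_of_tendstoUniformly h fun _ _ hc hn =>
    abs_log_sepSum_sub_log_sepSum_le hc hn ε).symm) hΦ

theorem mem_cyl_word (n : ℕ) (ω : Space M) : ω ∈ cyl M n (word M n ω) := fun _ => rfl

theorem word_eq_of_mem_cyl {n : ℕ} {w : Fin n → Fin k} {ω : Space M} (hω : ω ∈ cyl M n w) :
    word M n ω = w :=
  funext hω

theorem continuous_word (n : ℕ) : Continuous (word M n) :=
  continuous_pi fun j => (continuous_apply j.1).comp continuous_subtype_val

/-- The sequence `ψₙ(ω) = log μ(C) + nP`, with `C` the cylinder of length `n` containing `ω`: the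
sequence for which `μ` satisfies the Gibbs property with respect to `P` with equality. -/
noncomputable def cylPotential (μ : Measure (Space M)) (P : ℝ) (n : ℕ) (ω : Space M) : ℝ :=
  Real.log (μ (cyl M n (word M n ω))).toReal + n * P

theorem continuous_cylPotential (μ : Measure (Space M)) (P : ℝ) (n : ℕ) :
    Continuous (cylPotential μ P n) :=
  (continuous_of_discreteTopology
    (f := fun w : Fin n → Fin k => Real.log (μ (cyl M n w)).toReal + n * P)).comp
    (continuous_word n)

theorem gibbs_cylPotential (h : ∀ n ω, 0 < (μ (cyl M n (word M n ω))).toReal) (P : ℝ) :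
    Gibbs M (cylPotential μ P) P μ := by
  refine ⟨1, one_pos, fun n w ω hω => ?_⟩
  obtain rfl := word_eq_of_mem_cyl hω
  rw [cylPotential, add_sub_cancel_right, Real.exp_log (h n ω), div_self (h n ω).ne']
  norm_num

theorem WeakGibbs.toReal_cyl_pos (hμ : WeakGibbs M Φ P μ) (n : ℕ) (ω : Space M) :
    0 < (μ (cyl M n (word M n ω))).toReal := by
  obtain ⟨K, hK, -, hbounds⟩ := hμ
  have ratio_pos := (one_div_pos.2 (hK n)).trans_le (hbounds n _ ω (mem_cyl_word n ω)).1
  exact (div_pos_iff_of_pos_right (Real.exp_pos _)).1 ratio_pos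

theorem WeakGibbs.tendstoUniformly_cylPotential_sub_div (hμ : WeakGibbs M Φ P μ) :
    TendstoUniformly (fun n ω => (cylPotential μ P n ω - Φ n ω) / n) 0 atTop := by
  have cyl_pos := hμ.toReal_cyl_pos
  obtain ⟨K, hK, hK_lim, hbounds⟩ := hμ
  have abs_sub_le (n : ℕ) (ω : Space M) : |cylPotential μ P n ω - Φ n ω| ≤ Real.log (K n) := by
    have log_ratio := abs_log_le_log (hK n) (hbounds n _ ω (mem_cyl_word n ω))
    rwa [Real.log_div (cyl_pos n ω).ne' (Real.exp_pos _).ne', Real.log_exp, ← sub_add,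
      sub_add_eq_add_sub] at log_ratio
  refine Metric.tendstoUniformly_iff.2 fun ε hε => ?_
  filter_upwards [hK_lim.eventually_lt_const hε] with n hn ω
  calc dist (0 : ℝ) ((cylPotential μ P n ω - Φ n ω) / n)
      = |cylPotential μ P n ω - Φ n ω| / n := by simp
    _ ≤ Real.log (K n) / n := by gcongr; exact abs_sub_le n ω
    _ < ε := hn

end WG

open WG in
theorem weakGibbs_potential_is_gibbs_for_asympAdd_general
    {k : ℕ} {M : Matrix (Fin k) (Fin k) ℕ} {Φ : ℕ → Space M → ℝ} (hΦ : AsympAdd M Φ)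
    {P : ℝ} (hP : IsPressure M Φ P) {μ : Measure (Space M)} (hμ : WeakGibbs M Φ P μ) :
    ∃ Ψ : ℕ → Space M → ℝ, AsympAdd M Ψ ∧ IsPressure M Ψ P ∧ Gibbs M Ψ P μ :=
  have close := hμ.tendstoUniformly_cylPotential_sub_div
  ⟨cylPotential μ P, hΦ.congr (continuous_cylPotential μ P) close, hP.congr close,
    gibbs_cylPotential hμ.toReal_cyl_pos P⟩

open WG in
/-- every weak Gibbs measure for a continuous potential `φ` on a
topologically mixing subshift of finite type is a Gibbs measure for some asymptotically
additive sequence `Ψ`. -/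
theorem weakGibbs_potential_is_gibbs_for_asympAdd
    {k : ℕ} (M : Matrix (Fin k) (Fin k) ℕ) (hmix : Mixing M)
    (φ : Space M → ℝ) (hφ : Continuous φ)
    (P : ℝ) (hP : IsPressure M (fun n => birk M φ n) P)
    (μ : Measure (Space M)) (hμ : IsProbabilityMeasure μ)
    (hwg : WeakGibbs M (fun n => birk M φ n) P μ) :
    ∃ Ψ : ℕ → Space M → ℝ, AsympAdd M Ψ ∧ ∃ Q : ℝ, IsPressure M Ψ Q ∧ Gibbs M Ψ Q μ := by
  obtain ⟨Ψ, hΨ, hQ, hG⟩ :=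
    weakGibbs_potential_is_gibbs_for_asympAdd_general (asympAdd_birk hφ) hP hwg
  exact ⟨Ψ, hΨ, P, hQ, hG⟩
end
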